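/- arXiv:2311.02388 — 2 statements merged into one kernel-verified Lean document; each statement's English description precedes it below -/
import Mathlib

section
/- For all natural numbers p, q with p ≥ 1 and p < q < 2p − ⌊|p−2|/2⌋ (an inequality of integers), one has f(p−1, q−1) ≥ f(p,q) − 2. -/
/-- `mex S` is the least natural number not belonging to `S`. -/
noncomputable def mex (S : Set ℕ) : ℕ := sInf {n : ℕ | n ∉ S}

/-- `h 0 = 0` and `h n = 1` for all `n ≥ 1`. -/
def h : ℕ → ℕ
  | 0 => 0
  | _ + 1 => 1

/-- The nimber of the Circular sprout game `CS₄(𝒫₄ : p,1,q,1)`, defined by strong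
recursion: `f p q` is the mex of the set consisting of `h p ^^^ h q` together with all
values `f p' q' ^^^ f (p-1-p') (q-1-q')` for `0 ≤ p' ≤ p-1` and `0 ≤ q' ≤ q-1`. -/
noncomputable def f (p q : ℕ) : ℕ :=
  mex ({h p ^^^ h q} ∪
    ⋃ (p' : ℕ) (_ : p' < p) (q' : ℕ) (_ : q' < q),
      {f p' q' ^^^ f (p - 1 - p') (q - 1 - q')})
termination_by p
decreasing_by
  · omega
  · omega

/-!
The recursion has a closed form: `f p p = 1`, and `f p q = 2 * G p q` for `p ≠ q`, where
`G p q = min p q ⌊2 (p + q - 1) / 5⌋`, except that `G 1 2 = G 2 1 = 1`. Since `G` grows by at most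
`1` in a diagonal step, `f` grows by at most `2`.

To verify the closed form at `p ≠ q`, note that a split of `(p, q)` has at most one part on the
diagonal. If it has one, the resulting option is the odd number `2 * G a b + 1`, where `(a, b)` is
the other part; as `G` vanishes at the boundary and has diagonal steps at most `1`, every odd
number below `2 * G p q` occurs. Otherwise the option is twice the Nim-sum of two values of `G`.
Such a Nim-sum is never `G p q`: it is at most the ordinary sum, and reaching the value `n` costs
`p + q` about `5 n / 2`. All positive values `n < G p q` do occur: split off a part of value `0`,
or, in the boundary case `2 (p + q) = 5 n + 7`, the part `(1, 2)` or `(2, 1)` of value `1`.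
-/

/-! ### Nim-sums and the minimal excludant -/

theorem two_mul_xor_two_mul (x y : ℕ) : (2 * x) ^^^ (2 * y) = 2 * (x ^^^ y) := by
  simpa only [Nat.bit_false, bne_self_eq_false] using Nat.xor_bit false x false y

theorem two_mul_xor_one (x : ℕ) : (2 * x) ^^^ 1 = 2 * x + 1 :=
  Nat.xor_one_of_even (even_two_mul x)

theorem xor_le_add (x y : ℕ) : x ^^^ y ≤ x + y := by
  induction x using Nat.strong_induction_on generalizing y with
  | _ x ih =>
    rcases Nat.eq_zero_or_pos x with rfl | hx
    · simp
    · have hhalf : (x ^^^ y) / 2 ≤ x / 2 + y / 2 :=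
        Nat.xor_div_two ▸ ih (x / 2) (by omega) (y / 2)
      have hparity : (x ^^^ y) % 2 = (x + y) % 2 := Nat.xor_mod_two_eq
      omega

theorem mex_eq_of_forall_lt_mem {S : Set ℕ} {m : ℕ} (hlt : ∀ n < m, n ∈ S) (hm : m ∉ S) :
    mex S = m :=
  (Nat.sInf_le hm).antisymm (le_csInf ⟨m, hm⟩ fun n hn => not_lt.mp fun hnm => hn (hlt n hnm))

/-! ### The recursion as a fixed-point equation -/

theorem h_xor_h (p q : ℕ) : h p ^^^ h q = if (p = 0 ↔ q = 0) then 0 else 1 := by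
  cases p <;> cases q <;> simp [h]

/-- The Nim-sums of `g` over the ways to split the position `(p, q)` into two parts `(a, b)` and
`(c, d)`; for `g = f` these are the options of `(p, q)` other than `h p ^^^ h q`. The parts are
described by additive equations to avoid truncated subtraction. -/
def splitValues (g : ℕ → ℕ → ℕ) (p q : ℕ) : Set ℕ :=
  {n | ∃ a b c d, a + c + 1 = p ∧ b + d + 1 = q ∧ g a b ^^^ g c d = n}

theorem f_eq_mex (p q : ℕ) : f p q = mex (insert (h p ^^^ h q) (splitValues f p q)) := by
  rw [f, Set.singleton_union]
  congr 2
  ext n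
  simp only [Set.mem_iUnion, Set.mem_singleton_iff, splitValues, Set.mem_ofPred_eq]
  constructor
  · rintro ⟨a, ha, b, hb, rfl⟩
    exact ⟨a, b, p - 1 - a, q - 1 - b, by omega, by omega, rfl⟩
  · rintro ⟨a, b, c, d, rfl, rfl, rfl⟩
    refine ⟨a, by omega, b, by omega, ?_⟩
    rw [show a + c + 1 - 1 - a = c by omega, show b + d + 1 - 1 - b = d by omega]

theorem splitValues_congr {g g' : ℕ → ℕ → ℕ} {p : ℕ} (hg : ∀ a < p, g a = g' a) (q : ℕ) :
    splitValues g p q = splitValues g' p q := by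
  ext n
  refine exists₄_congr fun a b c d => and_congr_right fun hp => ?_
  rw [hg a (by omega), hg c (by omega)]

theorem f_eq_of_forall_eq_mex {g : ℕ → ℕ → ℕ}
    (hg : ∀ p q, g p q = mex (insert (h p ^^^ h q) (splitValues g p q))) : f = g := by
  funext p
  induction p using Nat.strong_induction_on with
  | _ p ih =>
    funext q
    rw [f_eq_mex, hg, splitValues_congr ih]

/-! ### The half value `G` -/

/-- Half of the nimber `f` off the diagonal. On the diagonal `G` has no meaning for the game. -/
def G (p q : ℕ) : ℕ :=
  if (p = 1 ∧ q = 2) ∨ (p = 2 ∧ q = 1) then 1 else min (min p q) (2 * (p + q - 1) / 5)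

theorem G_comm (p q : ℕ) : G p q = G q p := by
  unfold G; split_ifs <;> omega

theorem G_zero_left (q : ℕ) : G 0 q = 0 := by
  simp [G]

theorem G_zero_right (p : ℕ) : G p 0 = 0 := by
  simp [G]

theorem G_le_min (p q : ℕ) : G p q ≤ min p q := by
  unfold G; split_ifs <;> omega

theorem G_pos {p q : ℕ} (hp : 0 < p) (hq : 0 < q) (hpq : p ≠ q) : 0 < G p q := by
  unfold G; split_ifs <;> omega

theorem G_succ_succ_le (p q : ℕ) : G (p + 1) (q + 1) ≤ G p q + 1 := by
  unfold G; split_ifs <;> omega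

theorem G_succ_left_le (p q : ℕ) : G (p + 1) q ≤ G p q + 1 := by
  unfold G; split_ifs <;> omega

theorem five_mul_G_add_one_le {p q : ℕ} (hpq : p ≠ q) : 5 * G p q + 1 ≤ 2 * (p + q) := by
  unfold G; split_ifs <;> omega

theorem five_mul_G_add_two_le {p q : ℕ} (hpq : p ≠ q) (hG : G p q ≠ 1) :
    5 * G p q + 2 ≤ 2 * (p + q) := by
  unfold G at *; split_ifs at * <;> omega

theorem G_eq_min {p q : ℕ} (hpq : 5 * G p q + 7 ≤ 2 * (p + q)) : G p q = min p q := by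
  unfold G at *; split_ifs at * <;> omega

theorem G_eq_left {p q : ℕ} (hpq : p ≤ q) (hcost : 5 * p + 2 ≤ 2 * (p + q)) : G p q = p := by
  unfold G; split_ifs <;> omega

theorem G_eq_two_mul {a b j : ℕ} (hsum : a + b = 5 * j + 1) (ha : 2 * j ≤ a) (hb : 2 * j ≤ b) :
    G a b = 2 * j := by
  unfold G; split_ifs <;> omega

theorem exists_le_G_eq {p q n : ℕ} (hn : n ≤ G p q) : ∃ a ≤ p, G a q = n := by
  induction p with
  | zero => exact ⟨0, le_rfl, by have := G_zero_left q; omega⟩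
  | succ p ih =>
    by_cases hnp : n ≤ G p q
    · obtain ⟨a, ha, rfl⟩ := ih hnp
      exact ⟨a, by omega, rfl⟩
    · exact ⟨p + 1, le_rfl, by have := G_succ_left_le p q; omega⟩

theorem exists_diagonal_split_of_lt_G {p q n : ℕ} (hn : n < G p q) :
    ∃ a b c, a + c + 1 = p ∧ b + c + 1 = q ∧ G a b = n := by
  induction p generalizing q with
  | zero => simp [G_zero_left] at hn
  | succ p ih =>
    cases q with
    | zero => simp [G_zero_right] at hn
    | succ q =>
      obtain hlt | heq : n < G p q ∨ n = G p q := by have := G_succ_succ_le p q; omega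
      · obtain ⟨a, b, c, rfl, rfl, rfl⟩ := ih hlt
        exact ⟨a, b, c + 1, by omega, by omega, rfl⟩
      · exact ⟨p, q, 0, rfl, rfl, heq.symm⟩

/-! ### Splits into two off-diagonal parts -/

/-- The Nim-sums of `G` over the ways to split `(p, q)` into two parts off the diagonal, that is,
the halves of the even split values of a position off the diagonal. -/
def offDiagSplitValues (p q : ℕ) : Set ℕ :=
  {n | ∃ a b c d, a + c + 1 = p ∧ b + d + 1 = q ∧ a ≠ b ∧ c ≠ d ∧ G a b ^^^ G c d = n}

theorem offDiagSplitValues_comm (p q : ℕ) : offDiagSplitValues p q = offDiagSplitValues q p := by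
  have hsub (p q : ℕ) : offDiagSplitValues p q ⊆ offDiagSplitValues q p := by
    rintro n ⟨a, b, c, d, hp, hq, hab, hcd, rfl⟩
    exact ⟨b, a, d, c, hq, hp, hab.symm, hcd.symm, by rw [G_comm b, G_comm d]⟩
  exact (hsub p q).antisymm (hsub q p)

theorem G_notMem_offDiagSplitValues {p q : ℕ} (hpq : p ≠ q) : G p q ∉ offDiagSplitValues p q := by
  rintro ⟨a, b, c, d, rfl, rfl, hab, hcd, hxor⟩
  have hle : G (a + c + 1) (b + d + 1) ≤ G a b + G c d := hxor ▸ xor_le_add _ _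
  have hne : G a b ≠ G c d := by
    intro heq
    rw [heq, Nat.xor_self] at hxor
    exact (G_pos (by omega) (by omega) hpq).ne hxor
  have hcost : 5 * (G a b + G c d) + 3 ≤ 2 * (a + b + c + d) := by
    have hab₁ := five_mul_G_add_one_le hab
    have hcd₁ := five_mul_G_add_one_le hcd
    rcases ne_or_eq (G a b) 1 with h₁ | h₁
    · have := five_mul_G_add_two_le hab h₁
      omega
    · have := five_mul_G_add_two_le hcd (h₁ ▸ hne.symm)
      omega
  have hmin : G (a + c + 1) (b + d + 1) = min (a + c + 1) (b + d + 1) := G_eq_min (by omega)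
  have := G_le_min a b
  have := G_le_min c d
  omega

theorem mem_offDiagSplitValues_of_le_G {p q n : ℕ} (hpq : p < q) (hn : n ≤ G p q) :
    n ∈ offDiagSplitValues (p + 2) (q + 1) := by
  obtain ⟨a, ha, rfl⟩ := exists_le_G_eq hn
  exact ⟨a, q, p + 1 - a, 0, by omega, rfl, by omega, by omega, by
    rw [G_zero_right, Nat.xor_zero]⟩

theorem G_mem_offDiagSplitValues {p q : ℕ} (hpq : p ≠ q) :
    G p q ∈ offDiagSplitValues (p + 1) (q + 2) :=
  ⟨p, q, 0, 1, rfl, rfl, hpq, zero_ne_one, by rw [G_zero_left, Nat.xor_zero]⟩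

theorem two_mul_add_one_mem_offDiagSplitValues {a b j : ℕ} (hab : a ≠ b)
    (hsum : a + b = 5 * j + 1) (ha : 2 * j ≤ a) (hb : 2 * j ≤ b) :
    2 * j + 1 ∈ offDiagSplitValues (a + 2) (b + 3) := by
  have hG : G 1 2 = 1 := rfl
  exact ⟨a, b, 1, 2, rfl, rfl, hab, by decide, by
    rw [G_eq_two_mul hsum ha hb, hG, two_mul_xor_one]⟩

theorem mem_offDiagSplitValues_of_two_mul_add_eq {p q n : ℕ} (hpq : p < q) (hn : n < G p q)
    (hsum : 2 * (p + q) = 5 * n + 7) : n ∈ offDiagSplitValues p q := by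
  have hmin := G_le_min p q
  obtain ⟨j, rfl⟩ : ∃ j, n = 2 * j + 1 := ⟨n / 2, by omega⟩
  -- The complement of `(1, 2)` is diagonal if `q = p + 1`; then `(2, 1)` is split off instead.
  rcases eq_or_ne q (p + 1) with rfl | hq
  · obtain ⟨a, rfl⟩ : ∃ a, p = a + 3 := ⟨p - 3, by omega⟩
    rw [offDiagSplitValues_comm]
    exact two_mul_add_one_mem_offDiagSplitValues (by omega) (by omega) (by omega) (by omega)
  · obtain ⟨a, rfl⟩ : ∃ a, p = a + 2 := ⟨p - 2, by omega⟩
    obtain ⟨b, rfl⟩ : ∃ b, q = b + 3 := ⟨q - 3, by omega⟩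
    exact two_mul_add_one_mem_offDiagSplitValues (by omega) (by omega) (by omega) (by omega)

theorem mem_offDiagSplitValues_of_lt_G {p q n : ℕ} (hpq : p ≠ q) (hpos : 0 < n)
    (hn : n < G p q) : n ∈ offDiagSplitValues p q := by
  wlog hlt : p < q generalizing p q
  · rw [offDiagSplitValues_comm]
    exact this hpq.symm (G_comm p q ▸ hn) (by omega)
  have hmin := G_le_min p q
  obtain ⟨p, rfl⟩ : ∃ p', p = p' + 2 := ⟨p - 2, by omega⟩
  obtain ⟨q, rfl⟩ : ∃ q', q = q' + 2 := ⟨q - 2, by omega⟩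
  by_cases hle : n ≤ G p (q + 1)
  · exact mem_offDiagSplitValues_of_le_G (by omega) hle
  by_cases hsum : 2 * (p + 2 + (q + 2)) = 5 * n + 7
  · exact mem_offDiagSplitValues_of_two_mul_add_eq hlt hn hsum
  have hcost : 5 * G (p + 2) (q + 2) + 2 ≤ 2 * (p + 2 + (q + 2)) :=
    five_mul_G_add_two_le hpq (by omega)
  have hG : G p (q + 1) = min p (q + 1) := by
    by_contra hne
    have := mt G_eq_min hne
    omega
  obtain rfl : n = p + 1 := by omega
  have hpart : G (p + 1) q = p + 1 := G_eq_left (by omega) (by omega)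
  simpa only [hpart] using G_mem_offDiagSplitValues (show p + 1 ≠ q by omega)

/-! ### The closed form -/

/-- The closed form of the nimber `f`: twice `G` off the diagonal, and `1` on it. -/
def closedForm (p q : ℕ) : ℕ :=
  if p = q then 1 else 2 * G p q

theorem closedForm_self (p : ℕ) : closedForm p p = 1 :=
  if_pos rfl

theorem closedForm_of_ne {p q : ℕ} (hpq : p ≠ q) : closedForm p q = 2 * G p q :=
  if_neg hpq

theorem one_notMem_splitValues_closedForm_self (p : ℕ) : 1 ∉ splitValues closedForm p p := by
  rintro ⟨a, b, c, d, hp, hq, hxor⟩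
  rcases eq_or_ne a b with rfl | hab
  · obtain rfl : c = d := by omega
    simp [closedForm_self] at hxor
  · rw [closedForm_of_ne hab, closedForm_of_ne (by omega), two_mul_xor_two_mul] at hxor
    omega

theorem two_mul_mem_splitValues_closedForm_iff {p q n : ℕ} (hpq : p ≠ q) :
    2 * n ∈ splitValues closedForm p q ↔ n ∈ offDiagSplitValues p q := by
  constructor
  · rintro ⟨a, b, c, d, hp, hq, hxor⟩
    rcases eq_or_ne a b with rfl | hab
    · rw [closedForm_self, closedForm_of_ne (by omega), Nat.xor_comm, two_mul_xor_one] at hxor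
      omega
    rcases eq_or_ne c d with rfl | hcd
    · rw [closedForm_self, closedForm_of_ne hab, two_mul_xor_one] at hxor
      omega
    rw [closedForm_of_ne hab, closedForm_of_ne hcd, two_mul_xor_two_mul] at hxor
    exact ⟨a, b, c, d, hp, hq, hab, hcd, by omega⟩
  · rintro ⟨a, b, c, d, hp, hq, hab, hcd, rfl⟩
    exact ⟨a, b, c, d, hp, hq, by
      rw [closedForm_of_ne hab, closedForm_of_ne hcd, two_mul_xor_two_mul]⟩

theorem two_mul_add_one_mem_splitValues_closedForm {p q n : ℕ} (hpq : p ≠ q) (hn : n < G p q) :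
    2 * n + 1 ∈ splitValues closedForm p q := by
  obtain ⟨a, b, c, hp, hq, rfl⟩ := exists_diagonal_split_of_lt_G hn
  exact ⟨a, b, c, c, hp, hq, by
    rw [closedForm_self, closedForm_of_ne (by omega), two_mul_xor_one]⟩

theorem closedForm_eq_mex_self (p : ℕ) :
    closedForm p p = mex (insert (h p ^^^ h p) (splitValues closedForm p p)) := by
  rw [closedForm_self, Nat.xor_self]
  refine (mex_eq_of_forall_lt_mem (fun n hn => ?_) ?_).symm
  · exact Or.inl (Nat.lt_one_iff.mp hn)
  · rintro (hone | hone)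
    · exact one_ne_zero hone
    · exact one_notMem_splitValues_closedForm_self p hone

theorem closedForm_eq_mex_of_ne {p q : ℕ} (hpq : p ≠ q) :
    closedForm p q = mex (insert (h p ^^^ h q) (splitValues closedForm p q)) := by
  rw [closedForm_of_ne hpq, h_xor_h]
  refine (mex_eq_of_forall_lt_mem (fun n hn => ?_) ?_).symm
  · obtain ⟨k, rfl | rfl⟩ := Nat.even_or_odd' n
    · rcases Nat.eq_zero_or_pos k with rfl | hk
      · have hmin := G_le_min p q
        exact Or.inl (if_pos (by omega)).symm
      · exact Or.inr <| (two_mul_mem_splitValues_closedForm_iff hpq).mpr <|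
          mem_offDiagSplitValues_of_lt_G hpq hk (by omega)
    · exact Or.inr (two_mul_add_one_mem_splitValues_closedForm hpq (by omega))
  · rintro (hG | hG)
    · split_ifs at hG with hzero
      · have := G_pos (p := p) (q := q) (by omega) (by omega) hpq
        omega
      · omega
    · exact G_notMem_offDiagSplitValues hpq ((two_mul_mem_splitValues_closedForm_iff hpq).mp hG)

theorem f_eq_closedForm : f = closedForm := by
  refine f_eq_of_forall_eq_mex fun p q => ?_
  rcases eq_or_ne p q with rfl | hpq
  · exact closedForm_eq_mex_self p
  · exact closedForm_eq_mex_of_ne hpq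

theorem stmt10_general (p q : ℕ) : f (p + 1) (q + 1) ≤ f p q + 2 := by
  rw [f_eq_closedForm]
  rcases eq_or_ne p q with rfl | hpq
  · rw [closedForm_self, closedForm_self]
    omega
  · rw [closedForm_of_ne hpq, closedForm_of_ne (by omega)]
    have := G_succ_succ_le p q
    omega

theorem stmt10 (p q : ℕ) (hp : 1 ≤ p) (hpq : p < q)
    (hq : (q : ℤ) < 2 * (p : ℤ) - |(p : ℤ) - 2| / 2) :
    (f p q : ℤ) - 2 ≤ (f (p - 1) (q - 1) : ℤ) := by
  have := stmt10_general (p - 1) (q - 1)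
  rw [Nat.sub_add_cancel hp, Nat.sub_add_cancel (hp.trans hpq.le)] at this
  omega
end

section
/- For all natural numbers p and q, the value f(p,q) is odd if and only if p = q; moreover, when p = q the value equals 1. -/
section Xor

lemma two_mul_xor_two_mul_s12 (a b : ℕ) : 2 * a ^^^ 2 * b = 2 * (a ^^^ b) := by
  simpa only [Nat.shiftLeft_eq, pow_one, mul_comm _ 2] using
    (Nat.shiftLeft_xor_distrib (a := a) (b := b) (i := 1)).symm

lemma one_xor_two_mul (a : ℕ) : 1 ^^^ 2 * a = 2 * a + 1 := by
  rw [Nat.xor_comm, Nat.xor_one_of_even (even_two_mul a)]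

lemma xor_le_add_s12 (a b : ℕ) : a ^^^ b ≤ a + b := by
  induction a using Nat.strong_induction_on generalizing b with
  | _ a ih =>
  rcases a.eq_zero_or_pos with rfl | ha
  · simp
  have half_le : a / 2 ^^^ b / 2 ≤ a / 2 + b / 2 := ih (a / 2) (by omega) (b / 2)
  have div_two : (a ^^^ b) / 2 = a / 2 ^^^ b / 2 := Nat.xor_div_two
  have mod_two : (a ^^^ b) % 2 = (a + b) % 2 := Nat.xor_mod_two_eq
  omega

end Xor

lemma exists_le_eq_of_succ_le_add_one {u : ℕ → ℕ} (succ_le : ∀ n, u (n + 1) ≤ u n + 1)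
    {k n : ℕ} (zero_le : u 0 ≤ k) (hk : k ≤ u n) : ∃ i ≤ n, u i = k := by
  induction n with
  | zero => exact ⟨0, le_rfl, le_antisymm zero_le hk⟩
  | succ n ih =>
    by_cases hkn : k ≤ u n
    · obtain ⟨i, hi, rfl⟩ := ih hkn
      exact ⟨i, by omega, rfl⟩
    · exact ⟨n + 1, le_rfl, by have := succ_le n; omega⟩

section Recursion

variable {F G : ℕ → ℕ → ℕ} {p q n : ℕ} {S : Set ℕ}

lemma mex_eq_of_isLeast_compl (hn : IsLeast Sᶜ n) : mex S = n :=
  hn.csInf_eq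

lemma h_of_pos (hp : 0 < p) : h p = 1 := by
  obtain ⟨n, rfl⟩ := Nat.exists_eq_add_one.2 hp
  rfl

/-- The set whose mex defines `f p q`, with an arbitrary function `F` in place of `f` on the
smaller positions. The positions `(a, b)` and `(c, d)` of the two summands are constrained by
their sums, so that no truncated subtraction occurs. -/
def options (F : ℕ → ℕ → ℕ) (p q : ℕ) : Set ℕ :=
  {m | m = h p ^^^ h q ∨ ∃ a b c d, a + c + 1 = p ∧ b + d + 1 = q ∧ m = F a b ^^^ F c d}

lemma xor_h_mem_options (F : ℕ → ℕ → ℕ) (p q : ℕ) : h p ^^^ h q ∈ options F p q :=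
  Or.inl rfl

lemma xor_mem_options (F : ℕ → ℕ → ℕ) (a b c d : ℕ) :
    F a b ^^^ F c d ∈ options F (a + c + 1) (b + d + 1) :=
  Or.inr ⟨a, b, c, d, rfl, rfl, rfl⟩

lemma options_swap_subset (hF : ∀ a b, F a b = F b a) (p q : ℕ) :
    options F p q ⊆ options F q p := by
  rintro _ (rfl | ⟨a, b, c, d, rfl, rfl, rfl⟩)
  · rw [Nat.xor_comm]
    exact xor_h_mem_options F q p
  · rw [hF a, hF c]
    exact xor_mem_options F b a d c

lemma options_congr (hFG : ∀ a < p, ∀ b, F a b = G a b) : options F p q = options G p q := by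
  ext m
  refine or_congr Iff.rfl ⟨?_, ?_⟩ <;> rintro ⟨a, b, c, d, hp, hq, rfl⟩ <;>
    exact ⟨a, b, c, d, hp, hq, by rw [hFG a (by omega), hFG c (by omega)]⟩

lemma f_eq_mex_options (p q : ℕ) : f p q = mex (options f p q) := by
  rw [f]
  congr 1
  ext m
  simp only [Set.mem_union, Set.mem_singleton_iff, Set.mem_iUnion, options, Set.mem_ofPred_eq]
  refine or_congr Iff.rfl ⟨?_, ?_⟩
  · rintro ⟨a, ha, b, hb, rfl⟩
    exact ⟨a, b, p - 1 - a, q - 1 - b, by omega, by omega, rfl⟩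
  · rintro ⟨a, b, c, d, rfl, rfl, rfl⟩
    refine ⟨a, by omega, b, by omega, ?_⟩
    congr 2 <;> omega

lemma f_eq_of_eq_mex_options (hF : ∀ p q, F p q = mex (options F p q)) (p q : ℕ) :
    f p q = F p q := by
  induction p using Nat.strong_induction_on generalizing q with
  | _ p ih => rw [f_eq_mex_options, hF, options_congr ih]

end Recursion

section ClosedForm

variable {p q k : ℕ}

/-- Half of the value of `f` at an off-diagonal position. The truncated subtraction is harmless: at
`p = q = 0` the minimum is `0` anyway. -/
def halfNimber (p q : ℕ) : ℕ :=
  min (min p q) (if p + q = 3 then 1 else (2 * (p + q) - 2) / 5)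

/-- The closed form of `f`. -/
def nimber (p q : ℕ) : ℕ := if p = q then 1 else 2 * halfNimber p q

lemma lt_halfNimber_iff :
    k < halfNimber p q ↔ k < p ∧ k < q ∧ (5 * k + 7 ≤ 2 * (p + q) ∨ p + q = 3) := by
  unfold halfNimber
  split_ifs <;> omega

lemma halfNimber_comm (p q : ℕ) : halfNimber p q = halfNimber q p := by
  rw [halfNimber, halfNimber, min_comm p, add_comm p]

lemma halfNimber_le_left (p q : ℕ) : halfNimber p q ≤ p :=
  (min_le_left _ _).trans (min_le_left _ _)

lemma halfNimber_le_right (p q : ℕ) : halfNimber p q ≤ q :=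
  (min_le_left _ _).trans (min_le_right _ _)

lemma halfNimber_zero_left (q : ℕ) : halfNimber 0 q = 0 :=
  Nat.le_zero.1 (halfNimber_le_left 0 q)

lemma halfNimber_zero_right (p : ℕ) : halfNimber p 0 = 0 :=
  Nat.le_zero.1 (halfNimber_le_right p 0)

lemma halfNimber_succ_succ_le (p q : ℕ) : halfNimber (p + 1) (q + 1) ≤ halfNimber p q + 1 := by
  unfold halfNimber
  split_ifs <;> omega

lemma halfNimber_succ_left_le (p q : ℕ) : halfNimber (p + 1) q ≤ halfNimber p q + 1 := by
  unfold halfNimber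
  split_ifs <;> omega

lemma exists_le_halfNimber_diagonal_eq {e : ℕ} (hk : k ≤ halfNimber p (p + e)) :
    ∃ i ≤ p, halfNimber i (i + e) = k :=
  exists_le_eq_of_succ_le_add_one (u := fun i ↦ halfNimber i (i + e))
    (fun i ↦ by simpa only [add_right_comm] using halfNimber_succ_succ_le i (i + e))
    ((halfNimber_zero_left _).le.trans k.zero_le) hk

lemma exists_le_halfNimber_left_eq (hk : k ≤ halfNimber p q) : ∃ i ≤ p, halfNimber i q = k :=
  exists_le_eq_of_succ_le_add_one (u := fun i ↦ halfNimber i q)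
    (fun i ↦ halfNimber_succ_left_le i q) ((halfNimber_zero_left q).le.trans k.zero_le) hk

lemma five_mul_halfNimber_add_two_le (hpos : 0 < p + q) (hne : p + q ≠ 3) :
    5 * halfNimber p q + 2 ≤ 2 * (p + q) := by
  rw [halfNimber, if_neg hne]
  omega

lemma halfNimber_le_one_of_add_eq_three (hpq : p + q = 3) : halfNimber p q ≤ 1 := by
  rw [halfNimber, if_pos hpq]
  exact min_le_right _ _

lemma nimber_self (p : ℕ) : nimber p p = 1 :=
  if_pos rfl

lemma nimber_of_ne (hpq : p ≠ q) : nimber p q = 2 * halfNimber p q :=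
  if_neg hpq

lemma nimber_comm (p q : ℕ) : nimber p q = nimber q p := by
  simp only [nimber, halfNimber_comm p, eq_comm]

lemma even_nimber_iff : Even (nimber p q) ↔ p ≠ q := by
  by_cases hpq : p = q
  · simp [hpq, nimber_self]
  · simp [hpq, nimber_of_ne]

end ClosedForm

section NotOption

variable {a b c d : ℕ}

lemma halfNimber_xor_lt (hab : 0 < a + b) (hcd : 0 < c + d) :
    halfNimber a b ^^^ halfNimber c d < halfNimber (a + c + 1) (b + d + 1) := by
  have xor_le := xor_le_add_s12 (halfNimber a b) (halfNimber c d)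
  have le_a := halfNimber_le_left a b
  have le_b := halfNimber_le_right a b
  have le_c := halfNimber_le_left c d
  have le_d := halfNimber_le_right c d
  refine lt_halfNimber_iff.2 ⟨by omega, by omega, Or.inl ?_⟩
  by_cases hab3 : a + b = 3 <;> by_cases hcd3 : c + d = 3
  · have xor_lt_two : halfNimber a b ^^^ halfNimber c d < 2 ^ 1 :=
      Nat.xor_lt_two_pow (Nat.lt_succ_of_le (halfNimber_le_one_of_add_eq_three hab3))
        (Nat.lt_succ_of_le (halfNimber_le_one_of_add_eq_three hcd3))
    omega
  · have := halfNimber_le_one_of_add_eq_three hab3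
    have := five_mul_halfNimber_add_two_le hcd hcd3
    omega
  · have := five_mul_halfNimber_add_two_le hab hab3
    have := halfNimber_le_one_of_add_eq_three hcd3
    omega
  · have := five_mul_halfNimber_add_two_le hab hab3
    have := five_mul_halfNimber_add_two_le hcd hcd3
    omega

lemma nimber_ne_xor_h (p q : ℕ) : nimber p q ≠ h p ^^^ h q := by
  rcases eq_or_ne p q with rfl | hpq
  · simp [nimber_self]
  rw [nimber_of_ne hpq]
  rcases p.eq_zero_or_pos with rfl | hp
  · rw [halfNimber_zero_left, h_of_pos (Nat.pos_of_ne_zero hpq.symm)]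
    decide
  rcases q.eq_zero_or_pos with rfl | hq
  · rw [halfNimber_zero_right, h_of_pos hp]
    decide
  have half_pos : 0 < halfNimber p q := lt_halfNimber_iff.2 ⟨hp, hq, by omega⟩
  rw [h_of_pos hp, h_of_pos hq, Nat.xor_self]
  omega

lemma nimber_ne_xor_nimber (a b c d : ℕ) :
    nimber (a + c + 1) (b + d + 1) ≠ nimber a b ^^^ nimber c d := by
  intro heq
  have parity : a + c + 1 ≠ b + d + 1 ↔ (a ≠ b ↔ c ≠ d) := by
    simp only [← even_nimber_iff, heq, Nat.even_xor]
  obtain ⟨hab, hcd, hne⟩ : a ≠ b ∧ c ≠ d ∧ a + c + 1 ≠ b + d + 1 := by omega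
  rw [nimber_of_ne hab, nimber_of_ne hcd, nimber_of_ne hne, two_mul_xor_two_mul_s12] at heq
  have := halfNimber_xor_lt (a := a) (b := b) (c := c) (d := d) (by omega) (by omega)
  omega

lemma nimber_notMem_options (p q : ℕ) : nimber p q ∉ options nimber p q := by
  rintro (heq | ⟨a, b, c, d, rfl, rfl, heq⟩)
  · exact nimber_ne_xor_h p q heq
  · exact nimber_ne_xor_nimber a b c d heq

end NotOption

section Options

variable {p q k m a b c d : ℕ}

lemma two_mul_xor_mem_options (hab : a ≠ b) (hcd : c ≠ d) (hp : a + c + 1 = p)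
    (hq : b + d + 1 = q) : 2 * (halfNimber a b ^^^ halfNimber c d) ∈ options nimber p q := by
  subst hp hq
  rw [← two_mul_xor_two_mul_s12, ← nimber_of_ne hab, ← nimber_of_ne hcd]
  exact xor_mem_options nimber a b c d

lemma two_mul_halfNimber_add_one_mem_options (hcd : c ≠ d) (hp : a + c + 1 = p)
    (hq : a + d + 1 = q) : 2 * halfNimber c d + 1 ∈ options nimber p q := by
  subst hp hq
  simpa only [nimber_self, nimber_of_ne hcd, one_xor_two_mul] using xor_mem_options nimber a a c d

lemma two_mul_add_one_mem_options (hpq : p < q) (hk : k < halfNimber p q) :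
    2 * k + 1 ∈ options nimber p q := by
  obtain ⟨e, rfl⟩ := Nat.exists_eq_add_of_le hpq.le
  obtain ⟨i, hip, rfl⟩ := exists_le_halfNimber_diagonal_eq hk.le
  have hip' : i < p := hip.lt_of_ne fun heq ↦ hk.ne (by rw [heq])
  exact two_mul_halfNimber_add_one_mem_options (a := p - 1 - i) (by omega) (by omega) (by omega)

lemma two_mul_mem_options_of_le (hpq : p < q) (hk : k ≤ halfNimber p q) :
    2 * k ∈ options nimber (p + 2) (q + 1) := by
  obtain ⟨i, hip, rfl⟩ := exists_le_halfNimber_left_eq hk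
  simpa only [halfNimber_zero_right, Nat.xor_zero] using
    two_mul_xor_mem_options (a := i) (b := q) (c := p + 1 - i) (d := 0)
      (by omega) (by omega) (by omega) rfl

lemma two_mul_halfNimber_mem_options (hpq : p ≠ q) :
    2 * halfNimber p q ∈ options nimber (p + 1) (q + 2) := by
  simpa only [halfNimber_zero_left, Nat.xor_zero] using
    two_mul_xor_mem_options (p := p + 1) (q := q + 2) hpq zero_ne_one rfl rfl

lemma two_mul_mem_options_of_five_mul_add_seven_eq (hpq : p < q) (hkp : k < p)
    (hk : 5 * k + 7 = 2 * (p + q)) : 2 * k ∈ options nimber p q := by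
  obtain ⟨j, rfl⟩ : Odd k := by
    rw [Nat.odd_iff]
    omega
  have xor_one : 2 * j ^^^ 1 = 2 * j + 1 := Nat.xor_one_of_even (even_two_mul j)
  by_cases hq : q = p + 1
  · have half_eq : halfNimber (p - 3) (q - 2) = 2 * j := by
      rw [halfNimber, if_neg] <;> omega
    have half_two_one : halfNimber 2 1 = 1 := rfl
    simpa only [half_eq, half_two_one, xor_one] using
      two_mul_xor_mem_options (a := p - 3) (b := q - 2) (c := 2) (d := 1) (p := p) (q := q)
        (by omega) (by omega) (by omega) (by omega)
  · have half_eq : halfNimber (p - 2) (q - 3) = 2 * j := by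
      rw [halfNimber, if_neg] <;> omega
    have half_one_two : halfNimber 1 2 = 1 := rfl
    simpa only [half_eq, half_one_two, xor_one] using
      two_mul_xor_mem_options (a := p - 2) (b := q - 3) (c := 1) (d := 2) (p := p) (q := q)
        (by omega) (by omega) (by omega) (by omega)

lemma two_mul_mem_options (hpq : p < q) (hk : k < halfNimber p q) :
    2 * k ∈ options nimber p q := by
  obtain ⟨hkp, -, hsum⟩ := lt_halfNimber_iff.1 hk
  rcases k.eq_zero_or_pos with rfl | hk0
  · simpa [h_of_pos hkp, h_of_pos (hkp.trans hpq)] using xor_h_mem_options nimber p q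
  by_cases hk7 : 5 * k + 7 = 2 * (p + q)
  · exact two_mul_mem_options_of_five_mul_add_seven_eq hpq hkp hk7
  obtain hkp2 | rfl : k + 2 ≤ p ∨ p = k + 1 := by omega
  · obtain ⟨p, rfl⟩ := Nat.exists_eq_add_of_le' (show 2 ≤ p by omega)
    obtain ⟨q, rfl⟩ := Nat.exists_eq_add_of_le' (show 1 ≤ q by omega)
    have lt_half : k - 1 < halfNimber p q := lt_halfNimber_iff.2 (by omega)
    exact two_mul_mem_options_of_le (by omega) (by omega)
  · obtain ⟨q, rfl⟩ := Nat.exists_eq_add_of_le' (show 2 ≤ q by omega)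
    have lt_half : k - 1 < halfNimber k q := lt_halfNimber_iff.2 (by omega)
    have half_eq : halfNimber k q = k := le_antisymm (halfNimber_le_left k q) (by omega)
    simpa only [half_eq] using two_mul_halfNimber_mem_options (p := k) (q := q) (by omega)

lemma mem_options_of_lt_nimber_of_lt (hpq : p < q) (hm : m < nimber p q) :
    m ∈ options nimber p q := by
  rw [nimber_of_ne hpq.ne] at hm
  rcases m.even_or_odd' with ⟨k, rfl | rfl⟩
  · exact two_mul_mem_options hpq (by omega)
  · exact two_mul_add_one_mem_options hpq (by omega)

lemma mem_options_of_lt_nimber (hm : m < nimber p q) : m ∈ options nimber p q := by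
  rcases lt_trichotomy p q with hpq | rfl | hqp
  · exact mem_options_of_lt_nimber_of_lt hpq hm
  · obtain rfl : m = h p ^^^ h p := by
      rw [nimber_self] at hm
      rw [Nat.xor_self]
      omega
    exact xor_h_mem_options nimber p p
  · rw [nimber_comm] at hm
    exact options_swap_subset nimber_comm q p (mem_options_of_lt_nimber_of_lt hqp hm)

end Options

lemma nimber_eq_mex_options (p q : ℕ) : nimber p q = mex (options nimber p q) :=
  (mex_eq_of_isLeast_compl ⟨nimber_notMem_options p q,
    fun _ hm ↦ not_lt.1 (mt mem_options_of_lt_nimber hm)⟩).symm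

theorem f_eq_nimber (p q : ℕ) : f p q = nimber p q :=
  f_eq_of_eq_mex_options nimber_eq_mex_options p q

theorem stmt12 (p q : ℕ) : (Odd (f p q) ↔ p = q) ∧ (p = q → f p q = 1) := by
  rw [f_eq_nimber, ← Nat.not_even_iff_odd, even_nimber_iff, not_not]
  exact ⟨Iff.rfl, fun hpq ↦ hpq ▸ nimber_self p⟩
end
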